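/- arXiv:1409.3159 — 2 statements merged into one kernel-verified Lean document; each statement's English description precedes it below -/
import Mathlib

section
/- Let G be a connected graph with σ_2 ≥ t_3 − 1. Then t_2 ≥ t_3, i.e., the order of a longest path in G is at least the order of a largest 3-ended tree in G. (Corollary 12) -/
open SimpleGraph

variable {V : Type*}

/-- A set of vertices is independent in `G`. -/
def IsIndSet (G : SimpleGraph V) (s : Set V) : Prop :=
  ∀ ⦃u⦄, u ∈ s → ∀ ⦃v⦄, v ∈ s → ¬ G.Adj u v

/-- The number of end-vertices (vertices of degree one) of a subgraph `H`. -/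
noncomputable def endVertexCount {G : SimpleGraph V} (H : G.Subgraph) : ℕ :=
  {v : V | v ∈ H.verts ∧ (H.neighborSet v).ncard = 1}.ncard

/-- `H` is a cycle; a single vertex and a single edge are regarded as
simple cycles of orders 1 and 2, respectively. -/
def IsCycleSubgraph {G : SimpleGraph V} (H : G.Subgraph) : Prop :=
  H.Connected ∧ (H.verts.ncard ≤ 2 ∨ ∀ v ∈ H.verts, (H.neighborSet v).ncard = 2)

/-- `H` is a `k`-ended tree in `G`: a tree with at most `k` end-vertices (leaves);
a cycle is regarded as a 1-ended tree. -/
def IsKEndedTree (G : SimpleGraph V) (k : ℕ) (H : G.Subgraph) : Prop :=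
  (H.coe.IsTree ∧ endVertexCount H ≤ k) ∨ (1 ≤ k ∧ IsCycleSubgraph H)

/-- `t k`: the order of a largest `k`-ended tree in `G`. -/
noncomputable def maxKEndedOrder (G : SimpleGraph V) (k : ℕ) : ℕ :=
  sSup {n | ∃ H : G.Subgraph, IsKEndedTree G k H ∧ H.verts.ncard = n}

/-- `σ m`: the minimum degree sum over independent sets of `m` vertices of `G`,
and `+∞` if the independence number of `G` is less than `m`. -/
noncomputable def minDegreeSum (G : SimpleGraph V) [Fintype V] [DecidableRel G.Adj]
    (m : ℕ) : ℕ∞ :=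
  ⨅ s ∈ {s : Finset V | s.card = m ∧ IsIndSet G ↑s}, (∑ v ∈ s, G.degree v : ℕ∞)

lemma ncard_verts_le_card [Fintype V] {G : SimpleGraph V} (H : G.Subgraph) :
    H.verts.ncard ≤ Fintype.card V := by
  rw [← Nat.card_eq_fintype_card]
  exact Set.ncard_le_card _

lemma maxKEndedOrder_le_card [Fintype V] (G : SimpleGraph V) (k : ℕ) :
    maxKEndedOrder G k ≤ Fintype.card V :=
  csSup_le' (by rintro _ ⟨H, -, rfl⟩; exact ncard_verts_le_card H)

lemma IsKEndedTree.ncard_verts_le [Fintype V] {G : SimpleGraph V} {k : ℕ} {H : G.Subgraph}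
    (hH : IsKEndedTree G k H) : H.verts.ncard ≤ maxKEndedOrder G k :=
  le_csSup ⟨Fintype.card V, by rintro _ ⟨H, -, rfl⟩; exact ncard_verts_le_card H⟩ ⟨H, hH, rfl⟩

lemma SimpleGraph.Walk.IsPath.ncard_verts_toSubgraph {G : SimpleGraph V} {u v : V} {p : G.Walk u v}
    (hp : p.IsPath) : p.toSubgraph.verts.ncard = p.length + 1 := by
  classical
  have hs : p.toSubgraph.verts = (p.support.toFinset : Set V) := by
    ext w; simp
  rw [hs, Set.ncard_coe_finset, List.toFinset_card_of_nodup hp.support_nodup,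
    Walk.length_support]

lemma SimpleGraph.Walk.IsPath.isTree_coe_toSubgraph [Finite V] {G : SimpleGraph V} {u v : V}
    {p : G.Walk u v} (hp : p.IsPath) : p.toSubgraph.coe.IsTree := by
  classical
  refine isTree_iff_connected_and_card.2 ⟨p.toSubgraph_connected.coe, ?_⟩
  have he : p.toSubgraph.edgeSet = (p.edges.toFinset : Set (Sym2 V)) := by
    ext e; simp
  rw [Nat.card_coe_set_eq, Nat.card_coe_set_eq, hp.ncard_verts_toSubgraph,
    ← Set.ncard_image_of_injective _ (Sym2.map.injective Subtype.val_injective),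
    Subgraph.image_coe_edgeSet_coe, he, Set.ncard_coe_finset,
    List.toFinset_card_of_nodup hp.isTrail.edges_nodup, Walk.length_edges]

lemma SimpleGraph.Walk.IsPath.endVertexCount_toSubgraph_le {G : SimpleGraph V} {u v : V}
    {p : G.Walk u v} (hp : p.IsPath) : endVertexCount p.toSubgraph ≤ 2 := by
  refine (Set.ncard_le_ncard (t := {u, v}) ?_).trans (Set.ncard_insert_le u {v} |>.trans (by simp))
  rintro w ⟨hw, hw1⟩
  obtain ⟨i, rfl, hi⟩ := Walk.mem_support_iff_exists_getVert.1 (p.mem_verts_toSubgraph.1 hw)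
  by_contra hne
  have h0 : i ≠ 0 := by rintro rfl; simp at hne
  have hl : i ≠ p.length := by rintro rfl; simp at hne
  have := hp.ncard_neighborSet_toSubgraph_internal_eq_two h0 (by omega)
  omega

lemma length_le_maxKEndedOrder_two [Fintype V] {G : SimpleGraph V} {l : List V}
    (hl : l.IsChain G.Adj) (hd : l.Nodup) : l.length ≤ maxKEndedOrder G 2 := by
  rcases eq_or_ne l [] with rfl | hne
  · simp
  have hp : (Walk.ofSupport l hne hl).IsPath := by
    rw [Walk.isPath_def, Walk.support_ofSupport]; exact hd
  have h : IsKEndedTree G 2 (Walk.ofSupport l hne hl).toSubgraph :=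
    .inl ⟨hp.isTree_coe_toSubgraph, hp.endVertexCount_toSubgraph_le⟩
  have := h.ncard_verts_le
  rwa [hp.ncard_verts_toSubgraph, ← Walk.length_support, Walk.support_ofSupport] at this

/-- In a connected graph, a vertex list of a cycle that misses some vertex can be opened up and
extended to a longer path. -/
lemma exists_longer_path_of_closed {G : SimpleGraph V} (hG : G.Connected) {l : List V}
    (hl : l.IsChain G.Adj) (hd : l.Nodup) (hne : l ≠ [])
    (hclosed : G.Adj (l.getLast hne) (l.head hne)) {z : V} (hz : z ∉ l) :
    ∃ l' : List V, l'.IsChain G.Adj ∧ l'.Nodup ∧ l'.length = l.length + 1 := by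
  obtain ⟨p⟩ := hG.preconnected (l.head hne) z
  obtain ⟨d, -, hc, hw⟩ := p.exists_boundary_dart {x | x ∈ l} (List.head_mem hne) hz
  have hcw := d.adj
  simp only [Set.mem_ofPred_eq] at hc hw
  obtain ⟨A, B, hAB⟩ := List.append_of_mem hc
  refine ⟨d.snd :: ((d.fst :: B) ++ A), ?_, ?_, ?_⟩
  · subst hAB
    refine List.IsChain.cons_cons hcw.symm (List.IsChain.append hl.right_of_append
      hl.left_of_append ?_)
    intro x hx y hy
    cases A with
    | nil => simp at hy
    | cons a A =>
      rw [List.getLast?_eq_some_getLast (List.cons_ne_nil _ _)] at hx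
      simp only [List.head?_cons, Option.mem_def, Option.some.injEq] at hx hy
      subst hx hy
      simpa using hclosed
  · have hperm : ((d.fst :: B) ++ A).Perm l := by rw [hAB]; exact List.perm_append_comm
    exact List.nodup_cons.2 ⟨fun h => hw (hperm.mem_iff.1 h), hperm.nodup_iff.2 hd⟩
  · simp [hAB]; omega

/-- If the two ends of a path have all their neighbors on the path and their degree sum is at
least the order of the path, then some edge `l[i] l[i+1]` of the path is crossed: the first vertex
is adjacent to `l[i+1]` and the last vertex is adjacent to `l[i]`. -/
lemma exists_crossing [Fintype V] {G : SimpleGraph V} [DecidableRel G.Adj] {l : List V}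
    (hne : l ≠ []) (hhead : ∀ w, G.Adj (l.head hne) w → w ∈ l)
    (hlast : ∀ w, G.Adj (l.getLast hne) w → w ∈ l)
    (hdeg : l.length ≤ G.degree (l.head hne) + G.degree (l.getLast hne)) :
    ∃ (i : ℕ) (hi : i + 1 < l.length),
      G.Adj (l.head hne) l[i + 1] ∧ G.Adj (l.getLast hne) l[i] := by
  classical
  have hpos := List.length_pos_iff.2 hne
  let A : Finset ℕ := {i ∈ Finset.range (l.length - 1) |
    ∃ hi : i + 1 < l.length, G.Adj (l.head hne) l[i + 1]}
  let B : Finset ℕ := {i ∈ Finset.range (l.length - 1) |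
    ∃ hi : i < l.length, G.Adj (l.getLast hne) l[i]}
  have idxOf_ne_zero : ∀ x, G.Adj (l.head hne) x → l.idxOf x ≠ 0 := by
    intro x hx h0
    have := List.getElem_idxOf (List.idxOf_lt_length_of_mem (hhead x hx))
    simp only [h0, ← List.head_eq_getElem_zero hne] at this
    exact hx.ne this
  have hA : G.degree (l.head hne) ≤ A.card := by
    rw [← card_neighborFinset_eq_degree]
    refine Finset.card_le_card_of_injOn (fun w => l.idxOf w - 1) ?_ ?_
    · intro w hw
      have hw : G.Adj (l.head hne) w := by simpa using hw
      have hlt := List.idxOf_lt_length_of_mem (hhead w hw)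
      have h0 := idxOf_ne_zero w hw
      have : l.idxOf w - 1 + 1 = l.idxOf w := by omega
      simp only [A, Finset.coe_filter, Finset.mem_range, Set.mem_ofPred_eq, this,
        List.getElem_idxOf]
      exact ⟨by omega, hlt, hw⟩
    · intro w hw w' hw' h
      have hw : G.Adj (l.head hne) w := by simpa using hw
      have hw' : G.Adj (l.head hne) w' := by simpa using hw'
      have h1 := idxOf_ne_zero w hw
      have h2 := idxOf_ne_zero w' hw'
      exact (List.idxOf_inj (hhead w hw)).1 (by simp only at h; omega)
  have hB : G.degree (l.getLast hne) ≤ B.card := by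
    rw [← card_neighborFinset_eq_degree]
    refine Finset.card_le_card_of_injOn (fun w => l.idxOf w) ?_ ?_
    · intro w hw
      have hw : G.Adj (l.getLast hne) w := by simpa using hw
      have hlt := List.idxOf_lt_length_of_mem (hlast w hw)
      have h0 : l.idxOf w ≠ l.length - 1 := by
        intro h0
        have := List.getElem_idxOf hlt
        simp only [h0, ← List.getLast_eq_getElem hne] at this
        exact hw.ne this
      simp only [B, Finset.coe_filter, Finset.mem_range, Set.mem_ofPred_eq,
        List.getElem_idxOf]
      exact ⟨by omega, hlt, hw⟩
    · intro w hw w' hw' h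
      have hw : G.Adj (l.getLast hne) w := by simpa using hw
      exact (List.idxOf_inj (hlast w hw)).1 h
  by_contra hno
  have hdisj : Disjoint A B := by
    refine Finset.disjoint_left.2 fun i hiA hiB => hno ?_
    obtain ⟨-, hi, h1⟩ := Finset.mem_filter.1 hiA
    obtain ⟨-, _, h2⟩ := Finset.mem_filter.1 hiB
    exact ⟨i, hi, h1, h2⟩
  have hcard : (A ∪ B).card ≤ l.length - 1 := by
    simpa using Finset.card_le_card (Finset.union_subset (Finset.filter_subset _ _)
      (Finset.filter_subset _ _) : A ∪ B ⊆ Finset.range (l.length - 1))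
  rw [Finset.card_union_of_disjoint hdisj] at hcard
  omega

/-- Reversing the initial segment of a path up to a crossed edge yields a cycle on the same
vertices. -/
lemma exists_closed_of_crossing {G : SimpleGraph V} {l : List V} (hl : l.IsChain G.Adj)
    (hne : l ≠ []) {i : ℕ} (hi : i + 1 < l.length) (h₁ : G.Adj (l.head hne) l[i + 1])
    (h₂ : G.Adj (l.getLast hne) l[i]) :
    ∃ (l' : List V) (hne' : l' ≠ []), l'.IsChain G.Adj ∧ l'.Perm l ∧
      G.Adj (l'.getLast hne') (l'.head hne') := by
  obtain ⟨A, B, hAB, hA⟩ : ∃ A B, l = A ++ B ∧ A.length = i + 1 :=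
    ⟨l.take (i + 1), l.drop (i + 1), by simp, by simp; omega⟩
  subst hAB
  have hA0 : A ≠ [] := by rintro rfl; simp at hA
  have hB0 : B ≠ [] := by rintro rfl; simp at hi; omega
  have hAr : A.reverse ≠ [] := by simpa using hA0
  have e₁ : (A ++ B)[i + 1] = B.head hB0 := by
    rw [List.getElem_append_right (by omega), List.head_eq_getElem]; simp [hA]
  have e₂ : (A ++ B)[i] = A.getLast hA0 := by
    rw [List.getElem_append_left (by omega), List.getLast_eq_getElem]; simp [hA]
  rw [e₁, List.head_append_of_ne_nil hA0] at h₁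
  rw [e₂, List.getLast_append_of_ne_nil _ hB0] at h₂
  refine ⟨A.reverse ++ B, by simp [hA0], ?_, (List.reverse_perm A).append_right B, ?_⟩
  · refine List.IsChain.append ?_ hl.right_of_append ?_
    · rw [List.isChain_reverse]
      exact hl.left_of_append.imp fun _ _ h => h.symm
    · intro x hx y hy
      rw [List.getLast?_reverse, List.head?_eq_some_head hA0] at hx
      rw [List.head?_eq_some_head hB0] at hy
      cases hx; cases hy
      exact h₁
  · rw [List.getLast_append_of_ne_nil _ hB0, List.head_append_of_ne_nil hAr, List.head_reverse]
    exact h₂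

lemma minDegreeSum_two_le [Fintype V] {G : SimpleGraph V} [DecidableRel G.Adj] {u v : V}
    (huv : u ≠ v) (hadj : ¬ G.Adj u v) :
    minDegreeSum G 2 ≤ ((G.degree u + G.degree v : ℕ) : ℕ∞) := by
  classical
  have hmem : ({u, v} : Finset V) ∈ {s : Finset V | s.card = 2 ∧ IsIndSet G ↑s} := by
    refine ⟨Finset.card_pair huv, ?_⟩
    intro x hx y hy
    have := fun h : G.Adj v u => hadj h.symm
    simp only [Finset.coe_insert, Finset.coe_singleton, Set.mem_insert_iff,
      Set.mem_singleton_iff] at hx hy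
    rcases hx with rfl | rfl <;> rcases hy with rfl | rfl <;> simp_all
  refine (iInf₂_le _ hmem).trans ?_
  rw [Finset.sum_pair huv]
  push_cast
  exact le_rfl

/-- A longest path of a graph, given by its list of vertices. -/
lemma exists_longest_path [Fintype V] [Nonempty V] (G : SimpleGraph V) :
    ∃ l : List V, l ≠ [] ∧ l.IsChain G.Adj ∧ l.Nodup ∧
      ∀ l' : List V, l'.IsChain G.Adj → l'.Nodup → l'.length ≤ l.length := by
  obtain ⟨u, v, p, hp, hmax⟩ := Walk.exists_isPath_forall_isPath_length_le_length G
  refine ⟨p.support, p.support_ne_nil, p.isChain_adj_support, hp.support_nodup, ?_⟩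
  intro l' hl' hd'
  rcases eq_or_ne l' [] with rfl | hne
  · simp
  have hq : (Walk.ofSupport l' hne hl').IsPath := by
    rw [Walk.isPath_def, Walk.support_ofSupport]; exact hd'
  have := hmax _ _ _ hq
  have h2 := (Walk.ofSupport l' hne hl').length_support
  rw [Walk.support_ofSupport] at h2
  rw [Walk.length_support]
  omega

/-- **Corollary 12.** If `G` is connected and `σ_2 ≥ t_3 - 1`, then `t_2 ≥ t_3`. -/
theorem corollary12 [Fintype V] (G : SimpleGraph V) [DecidableRel G.Adj]
    (hG : G.Connected)
    (h : (maxKEndedOrder G 3 : ℕ∞) ≤ minDegreeSum G 2 + 1) :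
    maxKEndedOrder G 2 ≥ maxKEndedOrder G 3 := by
  classical
  by_contra! hlt
  have := hG.nonempty
  obtain ⟨l, hne, hl, hd, hmax⟩ := exists_longest_path G
  have hlen := length_le_maxKEndedOrder_two hl hd
  have hV := maxKEndedOrder_le_card G 3
  obtain ⟨z, hz⟩ : ∃ z, z ∉ l := by
    by_contra! hall
    have : Fintype.card V ≤ l.length := by
      rw [← List.toFinset_card_of_nodup hd, ← Finset.card_univ]
      exact Finset.card_le_card fun x _ => List.mem_toFinset.2 (hall x)
    omega
  have hnoclosed : ∀ (l' : List V) (hne' : l' ≠ []), l'.IsChain G.Adj → l'.Perm l →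
      ¬ G.Adj (l'.getLast hne') (l'.head hne') := by
    intro l' hne' hl' hperm hadj
    obtain ⟨m, hm, hmd, hmlen⟩ := exists_longer_path_of_closed hG hl' (hperm.nodup_iff.2 hd) hne'
      hadj (fun hmem => hz (hperm.mem_iff.1 hmem))
    have := hmax m hm hmd
    have := hperm.length_eq
    omega
  have hhead : ∀ w, G.Adj (l.head hne) w → w ∈ l := by
    intro w hw
    by_contra hwl
    have hc : (w :: l).IsChain G.Adj := by
      refine List.isChain_cons.2 ⟨fun y hy => ?_, hl⟩
      rw [List.head?_eq_some_head hne] at hy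
      cases hy
      exact hw.symm
    have := hmax _ hc (List.nodup_cons.2 ⟨hwl, hd⟩)
    simp at this
  have hlast : ∀ w, G.Adj (l.getLast hne) w → w ∈ l := by
    intro w hw
    by_contra hwl
    have hc : (l ++ [w]).IsChain G.Adj := by
      refine hl.append (.singleton w) fun x hx y hy => ?_
      rw [List.getLast?_eq_some_getLast hne] at hx
      cases hx
      simp only [List.head?_cons, Option.mem_def, Option.some.injEq] at hy
      exact hy ▸ hw
    have := hmax _ hc (by simp [List.nodup_append, hd]; grind)
    simp at this
  have hends : l.head hne ≠ l.getLast hne := by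
    intro heq
    obtain ⟨a, rfl⟩ : ∃ a, l = [a] := by
      refine List.length_eq_one_iff.1 ?_
      rw [List.head_eq_getElem_zero hne, List.getLast_eq_getElem, hd.getElem_inj_iff] at heq
      have := List.length_pos_iff.2 hne
      omega
    have : Nontrivial V := ⟨a, z, by simpa [eq_comm] using hz⟩
    obtain ⟨w, hw⟩ := hG.preconnected.exists_adj_of_nontrivial a
    have := hhead w hw
    simp only [List.mem_singleton] at this
    exact hw.ne this.symm
  have hnadj : ¬ G.Adj (l.head hne) (l.getLast hne) := fun hadj =>
    hnoclosed l hne hl (.refl l) hadj.symm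
  have hdeg : maxKEndedOrder G 3 ≤ G.degree (l.head hne) + G.degree (l.getLast hne) + 1 := by
    have := h.trans (add_le_add_left (minDegreeSum_two_le hends hnadj) 1)
    exact_mod_cast this
  obtain ⟨i, hi, h₁, h₂⟩ := exists_crossing hne hhead hlast (by omega)
  obtain ⟨l', hne', hl', hperm, hadj⟩ := exists_closed_of_crossing hl hne hi h₁ h₂
  exact hnoclosed l' hne' hl' hperm hadj
end

section
/- Let G be a connected graph with σ_2 ≥ t_3 − 2. Then t_2 ≥ t_3 − 1. (Corollary 14) -/
open SimpleGraph

variable {V : Type*}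

/-- A crossing-free pair of predicates along a list holds at most `length - 1` times in total. -/
theorem List.countP_tail_add_countP_dropLast_le {α : Type*} (f g : α → Bool) (L : List α)
    (h : L.IsChain fun a b => ¬(g a = true ∧ f b = true)) :
    L.tail.countP f + L.dropLast.countP g ≤ L.length - 1 := by
  induction L with
  | nil => simp
  | cons a l ih =>
    cases l with
    | nil => simp
    | cons b l =>
      rw [List.isChain_cons_cons] at h
      have := ih h.2
      simp only [List.tail_cons, List.dropLast_cons_cons, List.countP_cons, List.length_cons] at *
      grind

theorem List.countP_dropLast_eq {α : Type*} {g : α → Bool} {L : List α}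
    (h : ∀ z ∈ L.getLast?, g z = false) : L.dropLast.countP g = L.countP g := by
  rcases L.eq_nil_or_concat with rfl | ⟨l, a, rfl⟩
  · simp
  · simp_all

theorem List.countP_tail_eq {α : Type*} {f : α → Bool} {L : List α}
    (h : ∀ z ∈ L.head?, f z = false) : L.tail.countP f = L.countP f := by
  cases L <;> simp_all

/-- A closed chain can be rotated so as to end at any prescribed element. -/
theorem List.IsChain.exists_perm_getLast_eq {α : Type*} {R : α → α → Prop} {C : List α} {c : α}
    (hC : C.IsChain R) (hclose : ∀ a ∈ C.getLast?, ∀ b ∈ C.head?, R a b) (hc : c ∈ C) :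
    ∃ C' : List α, C'.Perm C ∧ C'.IsChain R ∧ C'.getLast? = some c := by
  classical
  obtain ⟨U, W, rfl⟩ := List.append_of_mem hc
  refine ⟨W ++ (U ++ [c]), ?_, ?_, by simp⟩
  · rw [List.perm_iff_count]; intro a; simp [List.count_append, List.count_cons]; omega
  · rw [List.isChain_split] at hC
    rw [List.isChain_append]
    refine ⟨hC.2.tail, hC.1, ?_⟩
    intro a ha b hb
    apply hclose a _ b
    · cases U <;> simp_all
    · cases W <;> simp_all

/-- The degree of a vertex is bounded by the number of its neighbours in a list containing them. -/
theorem SimpleGraph.degree_le_countP [Fintype V] (G : SimpleGraph V) [DecidableRel G.Adj]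
    {x : V} {L : List V} (h : ∀ w, G.Adj x w → w ∈ L) :
    G.degree x ≤ L.countP (fun w => decide (G.Adj x w)) := by
  classical
  rw [List.countP_eq_length_filter, ← G.card_neighborFinset_eq_degree]
  refine le_trans (Finset.card_le_card ?_) (List.toFinset_card_le _)
  intro w hw
  simp_all

/-- Let `P` be an `x`-`y` path and `D` a path pending from it. If every path of `G` misses at least
two of the vertices of this spider and all neighbours of `x` and `y` lie on it, then `x` and `y` are
nonadjacent and have small degree sum. -/
theorem not_adj_and_degree_add_degree_le [Fintype V] (G : SimpleGraph V) [DecidableRel G.Adj]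
    {P D : List V} {x y : V} (hP : P.IsChain G.Adj) (hD : D.IsChain G.Adj)
    (hnd : (P ++ D).Nodup) (hx : P.head? = some x) (hy : P.getLast? = some y)
    (hcD : ∀ d ∈ D.head?, ∃ c ∈ P, G.Adj c d)
    (hno : ∀ L : List V, L.IsChain G.Adj → L.Nodup → L.length + 1 < P.length + D.length)
    (hNx : ∀ w, G.Adj x w → w ∈ P ++ D) (hNy : ∀ w, G.Adj y w → w ∈ P ++ D) :
    ¬ G.Adj x y ∧ G.degree x + G.degree y + 3 ≤ P.length + D.length := by
  classical
  have hsym : ∀ {l : List V}, l.IsChain G.Adj → l.reverse.IsChain G.Adj := fun h =>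
    List.isChain_reverse.2 (h.imp fun _ _ hab => hab.symm)
  have hham : ∀ L : List V, L.IsChain G.Adj → L.Perm (P ++ D) → False := fun L h1 h2 => by
    have := hno L h1 (h2.nodup_iff.2 hnd)
    have := h2.length_eq
    simp at this
    omega
  have hcyc : ∀ C : List V, C.IsChain G.Adj → C.Perm P →
      (∀ a ∈ C.getLast?, ∀ b ∈ C.head?, G.Adj a b) → False := by
    intro C hC hCP hcl
    cases D with
    | nil => exact hham C hC (by simpa using hCP)
    | cons d D =>
      obtain ⟨c, hc, hcd⟩ := hcD d (by simp)
      obtain ⟨C', hp, hC', hl⟩ := hC.exists_perm_getLast_eq hcl (hCP.mem_iff.2 hc)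
      refine hham (C' ++ d :: D) ?_ ((hp.trans hCP).append_right _)
      rw [List.isChain_append]
      exact ⟨hC', hD, by simpa [hl] using hcd⟩
  have hxy : ¬ G.Adj x y := fun hadj =>
    hcyc P hP (List.Perm.refl _) (by simpa [hx, hy] using hadj.symm)
  refine ⟨hxy, ?_⟩
  obtain ⟨d₁, d₂, D, rfl⟩ : ∃ d₁ d₂ D', D = d₁ :: d₂ :: D' := by
    match D with
    | [] => have := hno P hP (List.nodup_append.1 hnd).1; simp at this
    | [d] => have := hno P hP (List.nodup_append.1 hnd).1; simp at this
    | d₁ :: d₂ :: D' => exact ⟨_, _, _, rfl⟩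
  have hnd' : (P ++ d₂ :: D).Nodup := hnd.sublist (by simp)
  have hD' : (d₂ :: D).IsChain G.Adj := hD.tail
  have hx1 : ¬ G.Adj x d₁ := fun hadj => by
    refine hham ((d₁ :: d₂ :: D).reverse ++ P) ?_ ?_
    · rw [List.isChain_append]
      exact ⟨hsym hD, hP, by simpa [hx] using hadj.symm⟩
    · exact List.perm_append_comm.trans ((List.reverse_perm _).append_left _)
  have hy1 : ¬ G.Adj y d₁ := fun hadj => by
    refine hham (P ++ (d₁ :: d₂ :: D)) ?_ (List.Perm.refl _)
    rw [List.isChain_append]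
    exact ⟨hP, hD, by simpa [hy] using hadj⟩
  have hx2 : ¬ G.Adj x d₂ := fun hadj => by
    have := hno ((d₂ :: D).reverse ++ P) ?_ ?_
    · simp at this; omega
    · rw [List.isChain_append]
      exact ⟨hsym hD', hP, by simpa [hx] using hadj.symm⟩
    · exact (List.perm_append_comm.trans ((List.reverse_perm _).append_left _)).nodup_iff.2 hnd'
  have hy2 : ¬ G.Adj y d₂ := fun hadj => by
    have := hno (P ++ (d₂ :: D)) ?_ hnd'
    · simp at this; omega
    · rw [List.isChain_append]
      exact ⟨hP, hD', by simpa [hy] using hadj⟩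
  have hyz : ∀ z ∈ (d₁ :: d₂ :: D).getLast?, ¬ G.Adj y z := fun z hz hadj => by
    refine hham (P ++ (d₁ :: d₂ :: D).reverse) ?_ ((List.reverse_perm _).append_left _)
    rw [List.isChain_append]
    refine ⟨hP, hsym hD, ?_⟩
    rw [List.head?_reverse, hy, hz]
    simpa using hadj
  have hchD : (d₁ :: d₂ :: D).IsChain
      fun a b => ¬(decide (G.Adj y a) = true ∧ decide (G.Adj x b) = true) := by
    rw [List.isChain_iff_forall_rel_of_append_cons_cons]
    rintro a b l₁ l₂ heq ⟨ha, hb⟩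
    rw [decide_eq_true_eq] at ha hb
    rw [heq] at hD
    rw [List.isChain_append_cons_cons] at hD
    refine hham ((b :: l₂).reverse ++ (P ++ (l₁ ++ [a]).reverse)) ?_ ?_
    · rw [List.isChain_append, List.isChain_append]
      refine ⟨hsym hD.2.2, ⟨hP, hsym hD.1, by simpa [hy] using ha⟩, ?_⟩
      simpa [hx] using hb.symm
    · rw [heq, List.perm_iff_count]; intro v
      simp [List.count_append, List.count_cons]; omega
  have hchP : P.IsChain
      fun a b => ¬(decide (G.Adj y a) = true ∧ decide (G.Adj x b) = true) := by
    rw [List.isChain_iff_forall_rel_of_append_cons_cons]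
    rintro a b l₁ l₂ rfl ⟨ha, hb⟩
    rw [decide_eq_true_eq] at ha hb
    rw [List.isChain_append_cons_cons] at hP
    refine hcyc ((l₁ ++ [a]) ++ (b :: l₂).reverse) ?_ ?_ ?_
    · rw [List.isChain_append]
      refine ⟨hP.1, hsym hP.2.2, ?_⟩
      rw [List.head?_reverse]
      have : (b :: l₂).getLast? = some y := by simpa using hy
      rw [this]
      simpa using ha.symm
    · rw [List.perm_iff_count]; intro v
      simp [List.count_append, List.count_cons]
    · have : (l₁ ++ [a] ++ (b :: l₂).reverse).head? = some x := by
        rw [← hx]; cases l₁ <;> simp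
      have hl : (l₁ ++ [a] ++ (b :: l₂).reverse).getLast? = some b := by
        rw [List.reverse_cons, ← List.append_assoc, List.getLast?_concat]
      rw [this, hl]
      simpa using hb.symm
  have hcP := List.countP_tail_add_countP_dropLast_le _ _ _ hchP
  have hcD := List.countP_tail_add_countP_dropLast_le _ _ _ hchD.tail
  rw [List.countP_tail_eq (by simp [hx]), List.countP_dropLast_eq (by simp [hy])] at hcP
  rw [List.tail_cons, List.countP_tail_eq (by simpa using hx2),
    List.countP_dropLast_eq (by simpa using hyz)] at hcD
  have hdx := G.degree_le_countP hNx
  have hdy := G.degree_le_countP hNy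
  rw [List.countP_append, List.countP_cons_of_neg (by simpa using hx1)] at hdx
  rw [List.countP_append, List.countP_cons_of_neg (by simpa using hy1)] at hdy
  rw [List.countP_cons_of_neg (by simpa using hx2)] at hcD hdx
  rw [List.countP_cons_of_neg (by simpa using hy2)] at hcD hdy
  have hpos : 0 < P.length := List.length_pos_of_mem (List.mem_of_mem_head? hx)
  simp only [List.length_cons] at hcD ⊢
  omega

/-- Attaching a pendant edge `uw` to a tree yields a tree. -/
theorem SimpleGraph.Subgraph.isTree_coe_sup_subgraphOfAdj [Finite V] {G : SimpleGraph V}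
    {H : G.Subgraph} (hH : H.coe.IsTree) {u w : V} (hu : u ∈ H.verts) (hw : w ∉ H.verts)
    (huw : G.Adj u w) : (H ⊔ G.subgraphOfAdj huw).coe.IsTree := by
  have hcard : ∀ K : G.Subgraph, Nat.card K.coe.edgeSet = K.edgeSet.ncard := fun K => by
    rw [← K.image_coe_edgeSet_coe,
      Set.ncard_image_of_injective _ (Sym2.map.injective Subtype.val_injective),
      Nat.card_coe_set_eq]
  rw [isTree_iff_connected_and_card, hcard, Nat.card_coe_set_eq] at hH ⊢
  refine ⟨(Subgraph.connected_sup (Subgraph.Connected.mk hH.1).preconnected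
    (Subgraph.subgraphOfAdj_connected huw).preconnected ⟨u, hu, by simp⟩).coe, ?_⟩
  have he : s(u, w) ∉ H.edgeSet := fun h => hw (H.edge_vert (H.adj_symm h))
  have hv : (H ⊔ G.subgraphOfAdj huw).verts = insert w H.verts := by
    ext v; simp; grind
  rw [hv, Set.ncard_insert_of_notMem hw, ← hH.2, Subgraph.edgeSet_sup,
    edgeSet_subgraphOfAdj, Set.union_singleton, Set.ncard_insert_of_notMem he]

/-- The set of end-vertices of a subgraph. -/
def endVertices {G : SimpleGraph V} (H : G.Subgraph) : Set V :=
  {v | v ∈ H.verts ∧ (H.neighborSet v).ncard = 1}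

/-- Attaching a pendant edge at a non-isolated vertex `u` of `H` replaces the possible end-vertex `u`
by the new vertex. -/
theorem endVertices_sup_subgraphOfAdj_subset [Finite V] {G : SimpleGraph V}
    {H : G.Subgraph} {u w : V} (hw : w ∉ H.verts) (huw : G.Adj u w)
    (hdeg : (H.neighborSet u).Nonempty) :
    endVertices (H ⊔ G.subgraphOfAdj huw) ⊆ insert w (endVertices H \ {u}) := by
  rintro v ⟨hv, hcard⟩
  by_cases hvw : v = w
  · exact Or.inl hvw
  have hvu : v ≠ u := by
    rintro rfl
    obtain ⟨a, ha⟩ := hdeg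
    obtain ⟨b, hb⟩ := Set.ncard_eq_one.1 hcard
    have h1 : a ∈ (H ⊔ G.subgraphOfAdj huw).neighborSet v := Or.inl ha
    have h2 : w ∈ (H ⊔ G.subgraphOfAdj huw).neighborSet v := Or.inr (by simp)
    rw [hb] at h1 h2
    have : a = w := h1.trans h2.symm
    exact hw (this ▸ H.edge_vert (H.adj_symm ha))
  refine Or.inr ⟨⟨?_, ?_⟩, hvu⟩
  · simpa [hvw, hvu] using hv
  · rwa [Subgraph.neighborSet_sup, neighborSet_subgraphOfAdj_of_ne_of_ne huw hvu hvw,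
      Set.union_empty] at hcard

/-- The vertices of a path, given as a list, span a tree whose end-vertices are among the ends of
the list. -/
theorem exists_isTree_of_isChain [Finite V] {G : SimpleGraph V} (l : List V) (a : V)
    (hc : (a :: l).IsChain G.Adj) (hnd : (a :: l).Nodup) :
    ∃ H : G.Subgraph, H.coe.IsTree ∧ H.verts = {v | v ∈ a :: l} ∧
      endVertices H ⊆ {a, (a :: l).getLast (by simp)} := by
  induction l generalizing a with
  | nil =>
    refine ⟨G.singletonSubgraph a, IsTree.coe_singletonSubgraph G a, by ext; simp, ?_⟩
    rintro v ⟨hv, -⟩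
    simpa using hv
  | cons b l ih =>
    rw [List.isChain_cons_cons] at hc
    obtain ⟨H, hH, hv, he⟩ := ih b hc.2 hnd.tail
    have ha : a ∉ H.verts := by rw [hv]; exact (List.nodup_cons.1 hnd).1
    have hb : b ∈ H.verts := by simp [hv]
    refine ⟨H ⊔ G.subgraphOfAdj hc.1.symm, Subgraph.isTree_coe_sup_subgraphOfAdj hH hb ha _, ?_, ?_⟩
    · ext v; simp [hv, or_comm]
    · cases l with
      | nil =>
        rintro v ⟨hv', -⟩
        simpa [hv, or_comm] using hv'
      | cons c l =>
        have hcv : c ∈ H.verts := by simp [hv]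
        have hbc : b ≠ c := by rintro rfl; simp at hnd
        have hne : (H.neighborSet b).Nonempty := by
          have : Nontrivial H.verts := ⟨⟨b, hb⟩, ⟨c, hcv⟩, by simpa using hbc⟩
          obtain ⟨w, hw⟩ := hH.connected.preconnected.exists_adj_of_nontrivial ⟨b, hb⟩
          exact ⟨w, hw⟩
        refine (endVertices_sup_subgraphOfAdj_subset ha _ hne).trans ?_
        rintro v (rfl | ⟨hve, hvb⟩)
        · simp
        · rcases he hve with h | h
          · exact absurd h hvb
          · right; simpa using h

theorem bddAbove_kEndedOrders [Finite V] (G : SimpleGraph V) (k : ℕ) :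
    BddAbove {n | ∃ H : G.Subgraph, IsKEndedTree G k H ∧ H.verts.ncard = n} := by
  refine ⟨Nat.card V, ?_⟩
  rintro n ⟨H, -, rfl⟩
  exact Set.ncard_le_card _

theorem IsKEndedTree.ncard_le [Finite V] {G : SimpleGraph V} {k : ℕ} {H : G.Subgraph}
    (hH : IsKEndedTree G k H) : H.verts.ncard ≤ maxKEndedOrder G k :=
  le_csSup (bddAbove_kEndedOrders G k) ⟨H, hH, rfl⟩

theorem length_le_maxKEndedOrder_two_s16 [Finite V] {G : SimpleGraph V} {L : List V}
    (hc : L.IsChain G.Adj) (hnd : L.Nodup) : L.length ≤ maxKEndedOrder G 2 := by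
  classical
  cases L with
  | nil => simp
  | cons a l =>
    obtain ⟨H, hH, hv, he⟩ := exists_isTree_of_isChain l a hc hnd
    have hcard : H.verts.ncard = (a :: l).length := by
      rw [← List.toFinset_card_of_nodup hnd, ← Set.ncard_coe_finset, hv, List.coe_toFinset]
    rw [← hcard]
    exact IsKEndedTree.ncard_le (Or.inl ⟨hH, (Set.ncard_le_ncard he).trans
      ((Set.ncard_insert_le _ _).trans (by rw [Set.ncard_singleton]))⟩)

/-- In a largest `k`-ended tree all neighbours of an end-vertex belong to the tree. -/
theorem mem_verts_of_adj_endVertex [Finite V] {G : SimpleGraph V} {k : ℕ} {H : G.Subgraph}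
    (hH : H.coe.IsTree) (hk : endVertexCount H ≤ k) (hmax : H.verts.ncard = maxKEndedOrder G k)
    {u w : V} (hu : u ∈ endVertices H) (huw : G.Adj u w) : w ∈ H.verts := by
  by_contra hw
  have hne : (H.neighborSet u).Nonempty := by
    rw [← Set.ncard_pos]; exact hu.2 ▸ one_pos
  have hend : endVertexCount (H ⊔ G.subgraphOfAdj huw) ≤ k :=
    calc (endVertices (H ⊔ G.subgraphOfAdj huw)).ncard
        ≤ (insert w (endVertices H \ {u})).ncard :=
          Set.ncard_le_ncard (endVertices_sup_subgraphOfAdj_subset hw huw hne)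
      _ ≤ (endVertices H \ {u}).ncard + 1 := Set.ncard_insert_le _ _
      _ = (endVertices H).ncard := Set.ncard_sdiff_singleton_add_one hu
      _ ≤ k := hk
  have hle := IsKEndedTree.ncard_le
    (Or.inl ⟨Subgraph.isTree_coe_sup_subgraphOfAdj hH hu.1 hw huw, hend⟩)
  have hlt : H.verts.ncard < (H ⊔ G.subgraphOfAdj huw).verts.ncard :=
    Set.ncard_lt_ncard ((Set.ssubset_iff_of_subset Set.subset_union_left).2 ⟨w, by simp, hw⟩)
  omega

/-- In a finite tree every vertex other than `x` lies on a path from `x` to a leaf. -/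
theorem SimpleGraph.IsTree.exists_isPath_to_leaf {W : Type*} [Finite W] {T : SimpleGraph W}
    (hT : T.IsTree) {x v : W} (hv : v ≠ x) :
    ∃ (e : W) (p : T.Walk x e), p.IsPath ∧ v ∈ p.support ∧ (T.neighborSet e).ncard = 1 := by
  have := Fintype.ofFinite W
  classical
  let s := {n | ∃ (e : W) (p : T.Walk x e), p.IsPath ∧ v ∈ p.support ∧ p.length = n}
  have hfin : s.Finite := (Set.finite_le_nat (Fintype.card W)).subset
    fun n ⟨_, _, hp, _, hn⟩ => hn ▸ hp.length_lt.le
  obtain ⟨q, hq, -⟩ := hT.existsUnique_path x v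
  obtain ⟨_, ⟨e, p, hp, hvp, rfl⟩, hmax⟩ := hfin.exists_maximal ⟨_, v, q, hq, by simp, rfl⟩
  refine ⟨e, p, hp, hvp, Set.ncard_eq_one.2 ⟨p.penultimate, ?_⟩⟩
  have hnil : ¬ p.Nil := by
    intro h
    cases p with
    | nil => simp at hvp; exact hv hvp
    | cons => simp at h
  ext f
  simp only [mem_neighborSet, Set.mem_singleton_iff]
  constructor
  · intro hf
    by_contra hne
    have hfs : f ∉ p.support := fun h => hne (hT.isAcyclic.eq_penultimate_of_adj_end hp hf h)
    have := hmax ⟨f, p.concat hf, hp.concat hfs hf,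
      p.support_subset_support_concat hf hvp, rfl⟩
    simp at this
  · rintro rfl
    exact (p.adj_penultimate hnil).symm

/-- A finite tree whose leaves are among `x`, `y`, `z` consists of an `x`-`y` path and a path
pending from it. -/
theorem SimpleGraph.IsTree.exists_spider_lists {W : Type*} [Finite W] {T : SimpleGraph W}
    (hT : T.IsTree) {x y z : W}
    (hleaf : ∀ e, (T.neighborSet e).ncard = 1 → e = x ∨ e = y ∨ e = z) :
    ∃ P D : List W, P.IsChain T.Adj ∧ D.IsChain T.Adj ∧ (P ++ D).Nodup ∧
      P.head? = some x ∧ P.getLast? = some y ∧ (∀ d ∈ D.head?, ∃ c ∈ P, T.Adj c d) ∧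
      ∀ v, v ∈ P ++ D := by
  classical
  obtain ⟨p, hp, hpu⟩ := hT.existsUnique_path x y
  obtain ⟨q, hq, hqu⟩ := hT.existsUnique_path z x
  set F : W → Bool := fun w => decide (w ∉ p.support) with hF
  have hsplit := List.takeWhile_append_dropWhile (p := F) (l := q.support)
  have hchain := q.isChain_adj_support
  have hnodup := hq.support_nodup
  rw [← hsplit] at hchain hnodup
  rw [List.isChain_append] at hchain
  have hdrop : q.support.dropWhile F ≠ [] := by
    intro h
    rw [List.dropWhile_eq_nil_iff] at h
    simpa [hF] using h x q.end_mem_support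
  obtain ⟨c, R, hcR⟩ := List.exists_cons_of_ne_nil hdrop
  have hcp : c ∈ p.support := by
    have := List.head_dropWhile_not F hdrop
    simp only [hcR, List.head_cons] at this
    simpa [hF] using this
  have hqsub : ∀ v ∈ q.support, v ∈ p.support ++ (q.support.takeWhile F).reverse := by
    intro v hvq
    by_cases hvt : v ∈ q.support.takeWhile F
    · simp [hvt]
    have hvR : v ∈ c :: R := by
      rw [← hsplit, hcR, List.mem_append] at hvq
      exact hvq.resolve_left hvt
    have hlast : (c :: R).getLast (by simp) = x := by
      have hq' : q.support.getLast? = some x := by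
        rw [List.getLast?_eq_some_getLast q.support_ne_nil, q.getLast_support]
      rw [← hsplit, hcR, List.getLast?_append_cons,
        List.getLast?_eq_some_getLast (by simp)] at hq'
      exact Option.some.inj hq'
    let r : T.Walk c x := (Walk.ofSupport (c :: R) (List.cons_ne_nil c R)
      (hcR ▸ hchain.2.1)).copy List.head_cons hlast
    have hrs : r.support = c :: R :=
      (Walk.support_copy _ _ _).trans (Walk.support_ofSupport _ _)
    have hr : r.IsPath := by
      rw [Walk.isPath_def, hrs, ← hcR]
      exact (List.nodup_append.1 hnodup).2.1
    have heq : r = (p.takeUntil c hcp).reverse :=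
      (hT.existsUnique_path c x).unique hr (hp.takeUntil hcp).reverse
    rw [← hrs, heq, Walk.support_reverse, List.mem_reverse] at hvR
    exact List.mem_append_left _ (p.support_takeUntil_subset_support hcp hvR)
  refine ⟨p.support, (q.support.takeWhile F).reverse, p.isChain_adj_support,
    List.isChain_reverse.2 (hchain.1.imp fun _ _ h => h.symm), ?_, ?_, ?_, ?_, ?_⟩
  · rw [List.nodup_append]
    refine ⟨hp.support_nodup, List.nodup_reverse.2 (List.nodup_append.1 hnodup).1, ?_⟩
    rintro a ha _ hb rfl
    have := List.mem_takeWhile_imp (List.mem_reverse.1 hb)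
    simp [hF] at this
    exact this ha
  · rw [List.head?_eq_some_head p.support_ne_nil]; simp
  · rw [List.getLast?_eq_some_getLast p.support_ne_nil]; simp
  · intro d hd
    rw [List.head?_reverse] at hd
    exact ⟨c, hcp, (hchain.2.2 d hd c (by simp [hcR])).symm⟩
  · intro v
    by_cases hvx : v = x
    · simp [hvx]
    obtain ⟨e, r, hr, hvr, he⟩ := hT.exists_isPath_to_leaf hvx
    rcases hleaf e he with rfl | rfl | rfl
    · rw [(Walk.isPath_iff_nil.1 hr).eq_nil] at hvr
      simp at hvr
      exact absurd hvr hvx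
    · rw [hpu r hr] at hvr
      exact List.mem_append_left _ hvr
    · have := hqu r.reverse hr.reverse
      apply hqsub
      rw [← this]
      simpa using hvr

/-- **Corollary 14.** If `G` is connected and `σ_2 ≥ t_3 - 2`, then `t_2 ≥ t_3 - 1`. -/
theorem corollary14 [Fintype V] (G : SimpleGraph V) [DecidableRel G.Adj]
    (hG : G.Connected)
    (h : (maxKEndedOrder G 3 : ℕ∞) ≤ minDegreeSum G 2 + 2) :
    maxKEndedOrder G 2 + 1 ≥ maxKEndedOrder G 3 := by
  classical
  by_contra! hlt
  obtain ⟨H, hH, hmax⟩ : ∃ H : G.Subgraph, IsKEndedTree G 3 H ∧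
      H.verts.ncard = maxKEndedOrder G 3 := by
    refine Nat.sSup_mem ?_ (bddAbove_kEndedOrders G 3)
    obtain ⟨v⟩ := hG.nonempty
    refine ⟨_, G.singletonSubgraph v, Or.inr ⟨by simp, ?_, ?_⟩, rfl⟩
    · exact Subgraph.singletonSubgraph_connected
    · simp
  rcases hH with ⟨hT, hends⟩ | ⟨-, hcyc⟩
  swap
  · have := IsKEndedTree.ncard_le (k := 2) (Or.inr ⟨by simp, hcyc⟩)
    omega
  have hthree : (endVertices H).ncard = 3 := by
    refine le_antisymm hends ?_
    by_contra! h2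
    have := IsKEndedTree.ncard_le (k := 2) (Or.inl ⟨hT, Nat.le_of_lt_succ h2⟩)
    omega
  obtain ⟨x, y, z, hxy, -, -, hxyz⟩ := Set.ncard_eq_three.1 hthree
  have hx : x ∈ endVertices H := by simp [hxyz]
  have hy : y ∈ endVertices H := by simp [hxyz]
  have hz : z ∈ endVertices H := by simp [hxyz]
  obtain ⟨P, D, hP, hD, hnd, hPx, hPy, hcD, hall⟩ :=
    hT.exists_spider_lists (x := ⟨x, hx.1⟩) (y := ⟨y, hy.1⟩) (z := ⟨z, hz.1⟩) (by
      intro e he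
      have hmem : (e : V) ∈ endVertices H := by
        refine ⟨e.2, ?_⟩
        rw [← he, ← Set.ncard_image_of_injective _ Subtype.val_injective]
        congr 1
        ext w
        simpa using fun hw => H.edge_vert (H.adj_symm hw)
      rw [hxyz] at hmem
      simpa [Subtype.ext_iff] using hmem)
  have hchain : ∀ {L : List H.verts}, L.IsChain H.coe.Adj → (L.map Subtype.val).IsChain G.Adj :=
    fun hL => List.isChain_map_of_isChain _ (fun _ _ hab => H.adj_sub hab) hL
  have hmem : ∀ v ∈ H.verts, v ∈ P.map Subtype.val ++ D.map Subtype.val := fun v hv => by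
    rw [← List.map_append]
    exact List.mem_map_of_mem (hall ⟨v, hv⟩)
  have hcard : (P.map Subtype.val).length + (D.map Subtype.val).length = maxKEndedOrder G 3 := by
    rw [← hmax, ← Nat.card_coe_set_eq, Nat.card_eq_fintype_card, List.length_map, List.length_map,
      ← List.length_append, ← List.toFinset_card_of_nodup hnd, ← Finset.card_univ]
    congr 1
    ext v
    simpa using hall v
  obtain ⟨hnadj, hdeg⟩ := not_adj_and_degree_add_degree_le G (x := x) (y := y)
    (hchain hP) (hchain hD) (by
      rw [← List.map_append]
      exact hnd.map Subtype.val_injective)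
    (by rw [List.head?_map, hPx]; rfl) (by rw [List.getLast?_map, hPy]; rfl)
    (by
      intro d hd
      rw [List.head?_map, Option.mem_map] at hd
      obtain ⟨d, hd, rfl⟩ := hd
      obtain ⟨c, hc, hcd⟩ := hcD d hd
      exact ⟨c, List.mem_map_of_mem hc, H.adj_sub hcd⟩)
    (fun L hL hLn => by
      have := length_le_maxKEndedOrder_two_s16 hL hLn
      omega)
    (fun w hw => hmem w (mem_verts_of_adj_endVertex hT hends hmax hx hw))
    (fun w hw => hmem w (mem_verts_of_adj_endVertex hT hends hmax hy hw))
  have hσ : minDegreeSum G 2 ≤ ((G.degree x + G.degree y : ℕ) : ℕ∞) := by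
    refine (iInf₂_le ({x, y} : Finset V) ⟨Finset.card_pair hxy, ?_⟩).trans ?_
    swap
    · have hnadj' : ¬ G.Adj y x := fun hadj => hnadj hadj.symm
      intro u hu v hv
      simp only [Finset.coe_insert, Finset.coe_singleton, Set.mem_insert_iff,
        Set.mem_singleton_iff] at hu hv
      rcases hu with rfl | rfl <;> rcases hv with rfl | rfl <;> simp [hnadj, hnadj']
    · rw [Finset.sum_pair hxy]
      push_cast
      exact le_rfl
  have hfin : maxKEndedOrder G 3 ≤ G.degree x + G.degree y + 2 := by
    exact_mod_cast h.trans (add_le_add_left hσ 2)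
  omega
end
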